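/- arXiv:2104.11967 — 4 statements merged into one kernel-verified Lean document; each statement's English description precedes it below -/
import Mathlib

section
/- For every integer d ≥ 3, the constant C_d := ζ(d−1)·ζ(4d−2)/(ζ(d)·ζ(2d−2)) satisfies 1 < C_d < 1 + 2^{2−d}, where ζ is the Riemann zeta function. -/
/-!
Lower bound: comparing Euler factors at `p`, with `x = p⁻ˢ`, the inequality
`ζ(s + 1) ζ(2s) ≤ ζ(s)` reduces to `1 - x ≤ (1 - x / p) (1 - x²)`, that is to `1 + x ≤ p`. Taking
`s = d - 1`, the remaining factor `ζ(4d - 2)` exceeds `1`.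

Upper bound: `ζ(4d - 2) ≤ ζ(2d - 2)`, so it is enough that `ζ(s) < (1 + 2¹⁻ˢ) ζ(s + 1)` for `s ≥ 2`.
In `ζ(s) - ζ(s + 1) = ∑_{m ≥ 2} (m - 1) / mˢ⁺¹` one has `m²⁻ˢ ≤ 2²⁻ˢ` and
`(m - 1) / m³ ≤ 1 / m - 1 / (m + 1)`, so telescoping bounds the difference by `2²⁻ˢ / 2`.
-/

open Filter Topology

/-- The zeta function on the real half-line `s > 1`, as a real number. The term at `n = 0` vanishes
for `s ≠ 0`. -/
noncomputable def realZeta (s : ℝ) : ℝ := ∑' n : ℕ, (n : ℝ) ^ (-s)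

lemma summable_nat_rpow_neg {s : ℝ} (hs : 1 < s) : Summable fun n : ℕ => (n : ℝ) ^ (-s) :=
  Real.summable_nat_rpow.2 (neg_lt_neg hs)

lemma ofReal_realZeta {s : ℝ} (hs : 1 < s) : (realZeta s : ℂ) = riemannZeta s := by
  rw [zeta_eq_tsum_one_div_nat_cpow (by simpa using hs), realZeta, Complex.ofReal_tsum]
  refine tsum_congr fun n => ?_
  rw [Complex.ofReal_cpow n.cast_nonneg, Complex.ofReal_neg, Complex.cpow_neg,
    Complex.ofReal_natCast, one_div]

lemma one_lt_realZeta {s : ℝ} (hs : 1 < s) : 1 < realZeta s := by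
  have hsum : ∑ n ∈ Finset.range 3, (n : ℝ) ^ (-s) ≤ realZeta s :=
    (summable_nat_rpow_neg hs).sum_le_tsum _ fun n _ => by positivity
  have hs0 : -s ≠ 0 := by linarith
  have h2 : (0 : ℝ) < 2 ^ (-s) := by positivity
  simp only [Finset.sum_range_succ, Finset.sum_range_zero, Nat.cast_zero, Nat.cast_one,
    Nat.cast_ofNat, Real.zero_rpow hs0, Real.one_rpow] at hsum
  linarith

lemma realZeta_pos {s : ℝ} (hs : 1 < s) : 0 < realZeta s :=
  one_pos.trans (one_lt_realZeta hs)

lemma antitoneOn_realZeta : AntitoneOn realZeta (Set.Ioi 1) := by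
  intro s hs t ht hst
  refine (summable_nat_rpow_neg ht).tsum_le_tsum (fun n => ?_) (summable_nat_rpow_neg hs)
  rcases n.eq_zero_or_pos with rfl | hn
  · have hs0 : -s ≠ 0 := by linarith [Set.mem_Ioi.1 hs]
    have ht0 : -t ≠ 0 := by linarith [Set.mem_Ioi.1 ht]
    simp [Real.zero_rpow hs0, Real.zero_rpow ht0]
  · exact Real.rpow_le_rpow_of_exponent_le (mod_cast hn) (neg_le_neg hst)

lemma tendsto_eulerProduct_realZeta {s : ℝ} (hs : 1 < s) :
    Tendsto (fun n : ℕ => ∏ p ∈ n.primesBelow, (1 - (p : ℝ) ^ (-s))⁻¹) atTop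
      (𝓝 (realZeta s)) := by
  have h := riemannZeta_eulerProduct (s := s) (by simpa using hs)
  rw [← ofReal_realZeta hs] at h
  refine tendsto_ofReal_iff.1 (h.congr fun n => ?_)
  push_cast [Complex.ofReal_cpow (Nat.cast_nonneg _)]
  rfl

lemma one_sub_le_one_sub_div_mul_one_sub_sq {p x : ℝ} (hp : 2 ≤ p) (hx0 : 0 ≤ x) (hx1 : x ≤ 1) :
    1 - x ≤ (1 - x / p) * (1 - x ^ 2) := by
  have hxp : (1 + x) / p ≤ 1 := (div_le_one₀ (by linarith)).2 (by linarith)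
  have hfactor : 1 ≤ (1 - x / p) * (1 + x) := by
    calc 1 ≤ 1 + x * (1 - (1 + x) / p) :=
          le_add_of_nonneg_right (mul_nonneg hx0 (sub_nonneg.2 hxp))
      _ = (1 - x / p) * (1 + x) := by ring
  calc 1 - x ≤ (1 - x / p) * (1 + x) * (1 - x) :=
        le_mul_of_one_le_left (sub_nonneg.2 hx1) hfactor
    _ = (1 - x / p) * (1 - x ^ 2) := by ring

lemma eulerFactor_add_one_mul_eulerFactor_two_mul_le {p s : ℝ} (hp : 2 ≤ p) (hs : 0 < s) :
    (1 - p ^ (-(s + 1)))⁻¹ * (1 - p ^ (-(2 * s)))⁻¹ ≤ (1 - p ^ (-s))⁻¹ := by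
  have hp0 : 0 < p := by linarith
  have hx1 : p ^ (-s) < 1 := Real.rpow_lt_one_of_one_lt_of_neg (by linarith) (by linarith)
  have hdiv : p ^ (-(s + 1)) = p ^ (-s) / p := by
    rw [neg_add', Real.rpow_sub_one hp0.ne']
  have hsq : p ^ (-(2 * s)) = (p ^ (-s)) ^ 2 := by
    rw [← Real.rpow_mul_natCast hp0.le]
    congr 1
    push_cast
    ring
  rw [← mul_inv, hdiv, hsq]
  exact inv_anti₀ (sub_pos.2 hx1)
    (one_sub_le_one_sub_div_mul_one_sub_sq hp (by positivity) hx1.le)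

lemma realZeta_add_one_mul_realZeta_two_mul_le {s : ℝ} (hs : 1 < s) :
    realZeta (s + 1) * realZeta (2 * s) ≤ realZeta s := by
  refine le_of_tendsto_of_tendsto' ((tendsto_eulerProduct_realZeta (by linarith)).mul
    (tendsto_eulerProduct_realZeta (by linarith))) (tendsto_eulerProduct_realZeta hs) fun n => ?_
  rw [← Finset.prod_mul_distrib]
  have two_le_cast {p : ℕ} (hp : p ∈ n.primesBelow) : (2 : ℝ) ≤ p :=
    mod_cast (Nat.prime_of_mem_primesBelow hp).two_le
  have eulerFactor_nonneg {p : ℕ} (hp : p ∈ n.primesBelow) {t : ℝ} (ht : 0 < t) :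
      0 ≤ (1 - (p : ℝ) ^ (-t))⁻¹ :=
    inv_nonneg.2 <| sub_nonneg.2 <|
      Real.rpow_le_one_of_one_le_of_nonpos (by linarith [two_le_cast hp]) (by linarith)
  exact Finset.prod_le_prod
    (fun p hp => mul_nonneg (eulerFactor_nonneg hp (by linarith))
      (eulerFactor_nonneg hp (by linarith)))
    fun p hp => eulerFactor_add_one_mul_eulerFactor_two_mul_le (two_le_cast hp) (by linarith)

lemma hasSum_sub_succ_of_antitone {f : ℕ → ℝ} {l : ℝ} (hf : Antitone f)
    (hl : Tendsto f atTop (𝓝 l)) : HasSum (fun n => f n - f (n + 1)) (f 0 - l) := by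
  rw [hasSum_iff_tendsto_nat_of_nonneg fun n => sub_nonneg.2 (hf n.le_succ)]
  simpa only [Finset.sum_range_sub'] using hl.const_sub (f 0)

lemma hasSum_one_div_sub_one_div_succ :
    HasSum (fun n : ℕ => 1 / ((n : ℝ) + 2) - 1 / ((n : ℝ) + 2 + 1)) (1 / 2) := by
  have hanti : Antitone fun n : ℕ => 1 / ((n : ℝ) + 2) := fun m n hmn => by
    dsimp only
    gcongr
  have hlim : Tendsto (fun n : ℕ => 1 / ((n : ℝ) + 2)) atTop (𝓝 0) := by
    simpa using (tendsto_add_atTop_iff_nat 2).2 (tendsto_const_div_atTop_nhds_zero_nat (1 : ℝ))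
  convert hasSum_sub_succ_of_antitone hanti hlim using 2 with n
  · push_cast
    ring
  · simp

lemma rpow_neg_sub_rpow_neg_add_one_le {s x : ℝ} (hs : 2 ≤ s) (hx : 2 ≤ x) :
    x ^ (-s) - x ^ (-(s + 1)) ≤ 2 ^ (2 - s) * (1 / x - 1 / (x + 1)) := by
  have hx0 : 0 < x := by linarith
  have hpow : x ^ (2 - s) ≤ 2 ^ (2 - s) :=
    Real.rpow_le_rpow_of_nonpos two_pos hx (by linarith)
  have hcubic : (x - 1) / x ^ 3 ≤ 1 / x - 1 / (x + 1) := by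
    rw [div_sub_div _ _ (by positivity) (by positivity),
      div_le_div_iff₀ (by positivity) (by positivity)]
    nlinarith
  have hsplit : x ^ (-s) = x ^ (2 - s) / x ^ 2 := by
    rw [← Real.rpow_sub_natCast hx0.ne']
    congr 1
    push_cast
    ring
  calc x ^ (-s) - x ^ (-(s + 1)) = x ^ (2 - s) * ((x - 1) / x ^ 3) := by
        rw [neg_add', Real.rpow_sub_one hx0.ne', hsplit]
        field_simp
    _ ≤ 2 ^ (2 - s) * (1 / x - 1 / (x + 1)) :=
        mul_le_mul hpow hcubic (div_nonneg (by linarith) (by positivity)) (by positivity)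

lemma realZeta_sub_realZeta_add_one_le {s : ℝ} (hs : 2 ≤ s) :
    realZeta s - realZeta (s + 1) ≤ 2 ^ (1 - s) := by
  have hsum_s := summable_nat_rpow_neg (show 1 < s by linarith)
  have hsum_succ := summable_nat_rpow_neg (show 1 < s + 1 by linarith)
  have hdiff := hsum_s.sub hsum_succ
  have hs0 : -s ≠ 0 := by linarith
  have hs1 : -(s + 1) ≠ 0 := by linarith
  have hbound := hasSum_one_div_sub_one_div_succ.mul_left ((2 : ℝ) ^ (2 - s))
  calc realZeta s - realZeta (s + 1)
      = ∑' n : ℕ, ((n : ℝ) ^ (-s) - (n : ℝ) ^ (-(s + 1))) := (hsum_s.tsum_sub hsum_succ).symm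
    _ = ∑' n : ℕ, (((n + 2 : ℕ) : ℝ) ^ (-s) - ((n + 2 : ℕ) : ℝ) ^ (-(s + 1))) := by
        rw [← hdiff.sum_add_tsum_nat_add 2]
        simp only [Finset.sum_range_succ, Finset.sum_range_zero, Nat.cast_zero, Nat.cast_one,
          Real.zero_rpow hs0, Real.zero_rpow hs1, Real.one_rpow, sub_self, zero_add]
    _ ≤ 2 ^ (2 - s) * (1 / 2) := by
        refine hasSum_le (fun n => ?_) ((summable_nat_add_iff 2).2 hdiff).hasSum hbound
        rw [Nat.cast_add, Nat.cast_ofNat]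
        exact rpow_neg_sub_rpow_neg_add_one_le hs (by simp)
    _ = 2 ^ (1 - s) := by
        rw [mul_one_div, ← Real.rpow_sub_one two_ne_zero]
        congr 1
        ring

lemma realZeta_lt_one_add_two_rpow_mul {s : ℝ} (hs : 2 ≤ s) :
    realZeta s < (1 + 2 ^ (1 - s)) * realZeta (s + 1) := by
  have hpow : (0 : ℝ) < 2 ^ (1 - s) := by positivity
  calc realZeta s ≤ realZeta (s + 1) + 2 ^ (1 - s) :=
        sub_le_iff_le_add'.1 (realZeta_sub_realZeta_add_one_le hs)
    _ < realZeta (s + 1) + 2 ^ (1 - s) * realZeta (s + 1) := by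
        gcongr
        exact lt_mul_of_one_lt_right hpow (one_lt_realZeta (by linarith))
    _ = (1 + 2 ^ (1 - s)) * realZeta (s + 1) := by ring

/-- The constant `C_d` with a real parameter; meaningful for `d > 2`, where all four arguments of
`realZeta` exceed `1`. -/
noncomputable def zetaRatio (d : ℝ) : ℝ :=
  realZeta (d - 1) * realZeta (4 * d - 2) / (realZeta d * realZeta (2 * d - 2))

lemma ofReal_zetaRatio {d : ℝ} (hd : 2 < d) :
    (zetaRatio d : ℂ) = riemannZeta ((d : ℂ) - 1) * riemannZeta (4 * (d : ℂ) - 2) /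
      (riemannZeta (d : ℂ) * riemannZeta (2 * (d : ℂ) - 2)) := by
  rw [zetaRatio]
  push_cast [ofReal_realZeta (show 1 < d - 1 by linarith),
    ofReal_realZeta (show 1 < 4 * d - 2 by linarith), ofReal_realZeta (show 1 < d by linarith),
    ofReal_realZeta (show 1 < 2 * d - 2 by linarith)]
  rfl

lemma one_lt_zetaRatio {d : ℝ} (hd : 2 < d) : 1 < zetaRatio d := by
  have hd1 : 1 < d - 1 := by linarith
  have hprod := realZeta_add_one_mul_realZeta_two_mul_le hd1
  rw [sub_add_cancel, mul_sub_one] at hprod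
  rw [zetaRatio,
    one_lt_div (mul_pos (realZeta_pos (by linarith)) (realZeta_pos (by linarith)))]
  exact hprod.trans_lt (lt_mul_of_one_lt_right (realZeta_pos hd1) (one_lt_realZeta (by linarith)))

lemma zetaRatio_lt_one_add_two_rpow {d : ℝ} (hd : 3 ≤ d) : zetaRatio d < 1 + 2 ^ (2 - d) := by
  have hpos : 0 < realZeta (2 * d - 2) := realZeta_pos (by linarith)
  have hanti : realZeta (4 * d - 2) ≤ realZeta (2 * d - 2) :=
    antitoneOn_realZeta (Set.mem_Ioi.2 (by linarith)) (Set.mem_Ioi.2 (by linarith)) (by linarith)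
  have hlt := realZeta_lt_one_add_two_rpow_mul (show 2 ≤ d - 1 by linarith)
  rw [sub_add_cancel, show 1 - (d - 1) = 2 - d by ring] at hlt
  rw [zetaRatio, div_lt_iff₀ (mul_pos (realZeta_pos (by linarith)) hpos), ← mul_assoc]
  exact mul_lt_mul hlt hanti (realZeta_pos (by linarith))
    (mul_nonneg (by positivity) (realZeta_pos (by linarith)).le)

theorem statement1_general (d : ℝ) (hd : 3 ≤ d) (C : ℝ)
    (hC : (C : ℂ) = riemannZeta ((d : ℂ) - 1) * riemannZeta (4 * (d : ℂ) - 2) /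
        (riemannZeta (d : ℂ) * riemannZeta (2 * (d : ℂ) - 2))) :
    1 < C ∧ C < 1 + (2 : ℝ) ^ (2 - d) := by
  have hd2 : 2 < d := by linarith
  obtain rfl : C = zetaRatio d := Complex.ofReal_injective (hC.trans (ofReal_zetaRatio hd2).symm)
  exact ⟨one_lt_zetaRatio hd2, zetaRatio_lt_one_add_two_rpow hd⟩

theorem statement1 (d : ℕ) (hd : 3 ≤ d) (C : ℝ)
    (hC : (C : ℂ) = riemannZeta ((d : ℂ) - 1) * riemannZeta (4 * (d : ℂ) - 2) /
        (riemannZeta (d : ℂ) * riemannZeta (2 * (d : ℂ) - 2))) :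
    1 < C ∧ C < 1 + (2 : ℝ) ^ ((2 : ℤ) - (d : ℤ)) := by
  rw [← Real.rpow_intCast]
  simpa using statement1_general d (mod_cast hd) C (by simpa using hC)
end

section
/- Let d ≥ 2, N ∈ {2,3,4}, and let α be an N×N irreducible skew-symmetric matrix with entries in {−1,0,1} and α_{1N} = 1. Then for every R ≥ 1, every real L ≥ 2, and every pair (z₁,v) ∈ (Z_L^d)² with z₁·v = 0, z₁ ≠ 0, v ≠ 0 and |(z₁,v)|_∞ < (N−1)R, the number of points of Q̃_L(z₁,v) lying in the open cube B_R^{(N−2)d} is at most 2^{(N−2)d}·(NRL)^{(N−2)(d−1)}. -/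
/-!
For `w = (z₂, …, z_{N-1})` the equations read `w_j · (u_j + ∑_m c_{jm} w_m) = 0`, where `u_j` is a
combination of `z₁` and `v`. Since `z₁` and `v` are independent, irreducibility of `α` becomes:
every nonempty set `J` of indices contains some `j` with `u_j ≠ 0` or with `c_{jm} ≠ 0` for some
`m ∉ J`.

The coordinates of the points to be counted lie in a set `S` of `M ≤ 3RL` reals. One equation with
`u ≠ 0` is a hyperplane or a sphere, so some coordinate is a root of a nonzero quadratic polynomial
once the others are fixed; this leaves at most `2 M^(d-1)` points. The two equations for `N = 4` are
`x · (u₁ + a x + g y) = 0` and `y · (u₂ + h x + b y) = 0`.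
* If `g = 0` (or, symmetrically, `h = 0`), the first equation is a quadric in `x` alone, and for
  all but at most one `x` the second is a quadric in `y` with nonzero linear part.
* If `g, h ≠ 0`, then for fixed `x ≠ 0` the first equation confines `y` to a hyperplane with normal
  `x`. The second cuts this hyperplane properly, leaving `2 M^(d-2)` values of `y`, unless `b = 0`
  and `u₂` is a multiple of `x`. There are at most `2 M^(d-1)` such `x`: they are multiples of `u₂`
  if `u₂ ≠ 0`, and otherwise `x · y = 0`, so that `x` lies on the quadric `x · (u₁ + a x) = 0`.
-/

open MeasureTheory Real

noncomputable section

abbrev Ed (d : ℕ) := EuclideanSpace ℝ (Fin d)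

/-- the index `j+1 ∈ {2,…,N-1}` (1-based) of a middle variable, as an element of `Fin N`. -/
def embIdx (N : ℕ) (j : Fin (N - 2)) : Fin N := ⟨j.1 + 1, by have := j.2; omega⟩
/-- the first index (1-based index `1`). -/
def oneIdx (N : ℕ) (j : Fin (N - 2)) : Fin N := ⟨0, by have := j.2; omega⟩
/-- the last index (1-based index `N`). -/
def lastIdx (N : ℕ) (j : Fin (N - 2)) : Fin N := ⟨N - 1, by have := j.2; omega⟩

/-- the polynomial `q_j(z₂,…,z_{N-1}; z₁, v)`. -/
def qpoly {d N : ℕ} (α : Matrix (Fin N) (Fin N) ℤ) (z₁ v : Ed d)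
    (w : Fin (N - 2) → Ed d) (j : Fin (N - 2)) : ℝ :=
  ∑ i, w j i *
    ((α (embIdx N j) (oneIdx N j) : ℝ) * z₁ i + (α (embIdx N j) (lastIdx N j) : ℝ) * v i +
      ∑ m : Fin (N - 2), ((α (embIdx N j) (embIdx N m) : ℝ) -
        (α (embIdx N j) (lastIdx N j) : ℝ) * (α (oneIdx N j) (embIdx N m) : ℝ)) * w m i)

/-- irreducibility of a matrix: it cannot be brought by one and the same permutation of rows and
columns to a block-diagonal form with more than one block. -/
def IrredMat {N : ℕ} (α : Matrix (Fin N) (Fin N) ℤ) : Prop :=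
  ∀ I : Finset (Fin N), I.Nonempty → I ≠ Finset.univ → ∃ i ∈ I, ∃ j ∈ Iᶜ, α i j ≠ 0

/-- the set `Q̃_L(z₁,v) ∩ B_R^{(N-2)d}`. -/
def QtildeSet {d N : ℕ} (α : Matrix (Fin N) (Fin N) ℤ) (L : ℝ) (z₁ v : Ed d) (R : ℝ) :
    Set (Fin (N - 2) → Ed d) :=
  {w | (∀ j i, ∃ c : ℤ, w j i = (c : ℝ) / L) ∧ (∀ j, qpoly α z₁ v w j = 0) ∧ ∀ j i, |w j i| < R}


/-! ### Counting by fibres -/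

section Fibers

open Finset

lemma card_le_mul_of_fst_of_snd {V W : Type*} {G : Finset (V × W)} {a k : ℕ}
    (hfst : ∀ X : Finset V, (∀ x ∈ X, ∃ y, (x, y) ∈ G) → #X ≤ a)
    (hsnd : ∀ x, ∀ Y : Finset W, (∀ y ∈ Y, (x, y) ∈ G) → #Y ≤ k) : #G ≤ a * k := by
  classical
  have hfiber : ∀ x ∈ G.image Prod.fst, #{p ∈ G | p.1 = x} ≤ k := fun x _ => by
    have hinj : Set.InjOn Prod.snd (G.filter (·.1 = x) : Set (V × W)) := by
      intro p hp q hq hpq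
      rw [mem_coe, mem_filter] at hp hq
      exact Prod.ext (hp.2.trans hq.2.symm) hpq
    rw [← card_image_of_injOn hinj]
    refine hsnd x _ fun y hy => ?_
    obtain ⟨⟨x', y'⟩, hp, rfl⟩ := mem_image.1 hy
    obtain ⟨hpG, rfl⟩ := mem_filter.1 hp
    exact hpG
  calc #G ≤ k * #(G.image Prod.fst) :=
        card_le_mul_card_image_of_maps_to (fun p => mem_image_of_mem _) k hfiber
    _ ≤ k * a := Nat.mul_le_mul_left _ (hfst _ fun x hx => by simpa using hx)
    _ = a * k := mul_comm _ _

variable {ι β : Type*} [Fintype ι] {S : Finset β} {F : Finset (ι → β)}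

lemma card_le_mul_pow_of_agree_off (T : Finset ι) (k : ℕ) (hS : ∀ y ∈ F, ∀ i, y i ∈ S)
    (hk : ∀ F' ⊆ F, (∀ y ∈ F', ∀ y' ∈ F', ∀ i ∉ T, y i = y' i) → #F' ≤ k) :
    #F ≤ k * #S ^ (Fintype.card ι - #T) := by
  classical
  let restrict : (ι → β) → (↥Tᶜ → β) := fun y i => y i
  have hmaps : ∀ y ∈ F, restrict y ∈ Fintype.piFinset fun _ : ↥Tᶜ => S := fun y hy =>
    Fintype.mem_piFinset.2 fun i => hS y hy i
  have hfiber : ∀ r ∈ Fintype.piFinset fun _ : ↥Tᶜ => S, #{y ∈ F | restrict y = r} ≤ k := by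
    refine fun r _ => hk _ (filter_subset _ _) fun y hy y' hy' i hi => ?_
    exact congrFun ((mem_filter.1 hy).2.trans (mem_filter.1 hy').2.symm) ⟨i, mem_compl.2 hi⟩
  simpa [card_compl] using card_le_mul_card_image_of_maps_to hmaps k hfiber

lemma card_le_pow_card (hS : ∀ y ∈ F, ∀ i, y i ∈ S) : #F ≤ #S ^ Fintype.card ι := by
  classical
  have hF : F ⊆ Fintype.piFinset fun _ : ι => S := fun y hy => Fintype.mem_piFinset.2 (hS y hy)
  simpa using card_le_card hF

lemma card_le_pow_of_fst_eq {V : Type*} {G : Finset (V × (ι → β))}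
    (hS : ∀ p ∈ G, ∀ i, p.2 i ∈ S) (hfst : ∀ p ∈ G, ∀ q ∈ G, p.1 = q.1) :
    #G ≤ #S ^ Fintype.card ι := by
  rw [← one_mul (#S ^ Fintype.card ι)]
  refine card_le_mul_of_fst_of_snd (fun X hX => card_le_one.2 fun x hx x' hx' => ?_)
    fun x Y hY => card_le_pow_card fun y hy => hS _ (hY y hy)
  obtain ⟨⟨y, hy⟩, ⟨y', hy'⟩⟩ := And.intro (hX x hx) (hX x' hx')
  exact hfst _ hy _ hy'

end Fibers

/-! ### Quadrics and hyperplanes -/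

section Quadrics

open Finset

variable {ι 𝕜 : Type*} [Field 𝕜] {S : Finset 𝕜} {F : Finset (ι → 𝕜)} {x p n : ι → 𝕜} {l κ : 𝕜}

lemma card_le_of_mem_span_singleton (hS : ∀ y ∈ F, ∀ i, y i ∈ S) (hp : p ≠ 0)
    (hspan : ∀ y ∈ F, y ∈ Submodule.span 𝕜 {p}) : #F ≤ #S := by
  obtain ⟨i, hi⟩ := Function.ne_iff.1 hp
  refine card_le_card_of_injOn (fun y => y i) (fun y hy => hS y hy i) fun y hy y' hy' hyy' => ?_
  obtain ⟨t, rfl⟩ := Submodule.mem_span_singleton.1 (hspan y hy)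
  obtain ⟨s, rfl⟩ := Submodule.mem_span_singleton.1 (hspan y' hy')
  rw [mul_right_cancel₀ hi hyy']

lemma exists_mul_sub_mul_ne_zero {i : ι} (hxi : x i ≠ 0) (hp : p ∉ Submodule.span 𝕜 {x}) :
    ∃ j ≠ i, p j * x i - p i * x j ≠ 0 := by
  by_contra! hparallel
  refine hp (Submodule.mem_span_singleton.2 ⟨p i / x i, funext fun j => ?_⟩)
  by_cases hj : j = i
  · subst hj; simp [hxi]
  · simp only [Pi.smul_apply, smul_eq_mul]
    field_simp
    linear_combination - hparallel j hj

variable [Fintype ι]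

lemma exists_eq_add_smul_of_dotProduct_eq [DecidableEq ι] {i j : ι} (hij : i ≠ j) (hxi : x i ≠ 0)
    {y y' : ι → 𝕜} (hagree : ∀ k ∉ ({i, j} : Finset ι), y k = y' k) (hx : x ⬝ᵥ y = x ⬝ᵥ y') :
    ∃ t : 𝕜, y' = y + t • (x i • Pi.single j 1 - x j • Pi.single i 1) := by
  have hdiff : x i * (y' i - y i) + x j * (y' j - y j) = 0 := by
    have hdot : ∑ k, x k * (y' k - y k) = 0 := by
      simpa [dotProduct, mul_sub] using sub_eq_zero.2 hx.symm
    rwa [← sum_subset (subset_univ {i, j}) fun k _ hk => by rw [hagree k hk, sub_self, mul_zero],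
      sum_pair hij] at hdot
  refine ⟨(y' j - y j) / x i, funext fun k => ?_⟩
  by_cases hki : k = i
  · subst hki
    simp only [Pi.add_apply, Pi.smul_apply, Pi.sub_apply, Pi.single_eq_same, smul_eq_mul,
      Pi.single_eq_of_ne hij]
    field_simp
    linear_combination hdiff
  by_cases hkj : k = j
  · subst hkj
    simp only [Pi.add_apply, Pi.smul_apply, Pi.sub_apply, Pi.single_eq_same, smul_eq_mul,
      Pi.single_eq_of_ne hki]
    field_simp
    ring
  · simp [hki, hkj, hagree k (by simp [hki, hkj])]

lemma quadric_chord_eq_zero {y : ι → 𝕜} {t : 𝕜} (ht : t ≠ 0)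
    (hy : p ⬝ᵥ y + l * (y ⬝ᵥ y) = κ)
    (hyt : p ⬝ᵥ (y + t • n) + l * ((y + t • n) ⬝ᵥ (y + t • n)) = κ) :
    p ⬝ᵥ n + 2 * l * (y ⬝ᵥ n) + l * t * (n ⬝ᵥ n) = 0 := by
  simp only [dotProduct_add, add_dotProduct, dotProduct_smul, smul_dotProduct, smul_eq_mul] at hyt
  rw [dotProduct_comm n y] at hyt
  apply mul_left_cancel₀ ht
  linear_combination hyt - hy

lemma card_le_two_of_line_of_quadric (hn : n ⬝ᵥ n ≠ 0)
    (hline : ∀ y ∈ F, ∀ y' ∈ F, ∃ t : 𝕜, y' = y + t • n)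
    (hq : ∀ y ∈ F, p ⬝ᵥ y + l * (y ⬝ᵥ y) = κ) (hnd : l ≠ 0 ∨ p ⬝ᵥ n ≠ 0) : #F ≤ 2 := by
  by_contra! hF
  obtain ⟨y, hy, y₁, hy₁, y₂, hy₂, hne₁, hne₂, hne⟩ := two_lt_card.1 hF
  obtain ⟨t, rfl⟩ := hline y hy y₁ hy₁
  obtain ⟨s, rfl⟩ := hline y hy y₂ hy₂
  have ht : t ≠ 0 := by rintro rfl; simp at hne₁
  have hs : s ≠ 0 := by rintro rfl; simp at hne₂
  have hts : t - s ≠ 0 := sub_ne_zero.2 fun h => hne (by rw [h])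
  have chord_t := quadric_chord_eq_zero ht (hq y hy) (hq _ hy₁)
  have chord_s := quadric_chord_eq_zero hs (hq y hy) (hq _ hy₂)
  have hl : l = 0 := by
    have : l * ((t - s) * (n ⬝ᵥ n)) = 0 := by linear_combination chord_t - chord_s
    exact (mul_eq_zero.1 this).resolve_right (mul_ne_zero hts hn)
  exact hnd.elim (· hl) (· (by simpa [hl] using chord_t))

lemma card_le_of_quadric (hS : ∀ y ∈ F, ∀ i, y i ∈ S) (hp : p ≠ 0)
    (hq : ∀ y ∈ F, p ⬝ᵥ y + l * (y ⬝ᵥ y) = κ) : #F ≤ 2 * #S ^ (Fintype.card ι - 1) := by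
  classical
  obtain ⟨i, hi⟩ := Function.ne_iff.1 hp
  refine card_le_mul_pow_of_agree_off {i} 2 hS fun F' hF' hagree => ?_
  refine card_le_two_of_line_of_quadric (n := Pi.single i 1) (by simp) (fun y hy y' hy' => ?_)
    (fun y hy => hq y (hF' hy)) (Or.inr (by simpa using hi))
  refine ⟨y' i - y i, funext fun k => ?_⟩
  by_cases hk : k = i
  · subst hk; simp
  · simp [hk, hagree y hy y' hy' k (by simpa using hk)]

lemma card_le_of_hyperplane_of_quadric [LinearOrder 𝕜] [IsStrictOrderedRing 𝕜] {κ' : 𝕜}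
    (hι : 2 ≤ Fintype.card ι) (hS : ∀ y ∈ F, ∀ i, y i ∈ S) (hx : x ≠ 0)
    (hnd : l ≠ 0 ∨ p ∉ Submodule.span 𝕜 {x}) (hplane : ∀ y ∈ F, x ⬝ᵥ y = κ')
    (hq : ∀ y ∈ F, p ⬝ᵥ y + l * (y ⬝ᵥ y) = κ) :
    #F ≤ 2 * #S ^ (Fintype.card ι - 2) := by
  classical
  obtain ⟨i, hi⟩ := Function.ne_iff.1 hx
  obtain ⟨j, hji, hj⟩ : ∃ j ≠ i, l ≠ 0 ∨ p j * x i - p i * x j ≠ 0 := by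
    rcases hnd with hl | hp
    · have : Nontrivial ι := Fintype.one_lt_card_iff_nontrivial.1 hι
      exact (exists_ne i).imp fun j hj => ⟨hj, Or.inl hl⟩
    · exact (exists_mul_sub_mul_ne_zero hi hp).imp fun j hj => ⟨hj.1, Or.inr hj.2⟩
  rw [← card_pair hji.symm]
  refine card_le_mul_pow_of_agree_off {i, j} _ hS fun F' hF' hagree => ?_
  rw [card_pair hji.symm]
  refine card_le_two_of_line_of_quadric (n := x i • Pi.single j 1 - x j • Pi.single i 1)
    (fun h => hi (by simpa [hji] using congrFun (dotProduct_self_eq_zero.1 h) j))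
    (fun y hy y' hy' => ?_) (fun y hy => hq y (hF' hy)) (hj.imp_right fun h h' => h ?_)
  · exact exists_eq_add_smul_of_dotProduct_eq hji.symm hi (hagree y hy y' hy')
      ((hplane y (hF' hy)).trans (hplane y' (hF' hy')).symm)
  · simp only [dotProduct_sub, dotProduct_smul, dotProduct_single, mul_one, smul_eq_mul] at h'
    linear_combination h'

end Quadrics

/-! ### Two coupled quadrics -/

section CoupledPairs

open Finset

/-- The vectors `x` and `y` have all their coordinates in `S` and solve the coupled system
`x · (u₁ + a x + g y) = 0`, `y · (u₂ + h x + b y) = 0`. The products are expanded, so that each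
equation is visibly a quadric in each of the two variables. -/
structure IsCoupledPair {ι 𝕜 : Type*} [Fintype ι] [Field 𝕜] (S : Finset 𝕜) (u₁ u₂ : ι → 𝕜)
    (a g h b : 𝕜) (x y : ι → 𝕜) : Prop where
  fst_mem : ∀ i, x i ∈ S
  snd_mem : ∀ i, y i ∈ S
  fst_eq : u₁ ⬝ᵥ x + g * (x ⬝ᵥ y) + a * (x ⬝ᵥ x) = 0
  snd_eq : u₂ ⬝ᵥ y + h * (x ⬝ᵥ y) + b * (y ⬝ᵥ y) = 0

variable {ι 𝕜 : Type*} [Fintype ι] [Field 𝕜] {S : Finset 𝕜} {u₁ u₂ x y : ι → 𝕜} {a g h b : 𝕜}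

lemma IsCoupledPair.swap (hxy : IsCoupledPair S u₁ u₂ a g h b x y) :
    IsCoupledPair S u₂ u₁ b h g a y x where
  fst_mem := hxy.snd_mem
  snd_mem := hxy.fst_mem
  fst_eq := by rw [dotProduct_comm y x, hxy.snd_eq]
  snd_eq := by rw [dotProduct_comm y x, hxy.fst_eq]

lemma IsCoupledPair.dotProduct_eq (hxy : IsCoupledPair S u₁ u₂ a g h b x y) (hg : g ≠ 0) :
    x ⬝ᵥ y = -(u₁ ⬝ᵥ x + a * (x ⬝ᵥ x)) / g := by
  rw [eq_div_iff hg]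
  linear_combination hxy.fst_eq

lemma card_snd_le_of_ne_zero {Y : Finset (ι → 𝕜)} (hg : g ≠ 0) (hx : x ≠ 0)
    (hY : ∀ y ∈ Y, IsCoupledPair S u₁ u₂ a g h b x y) :
    #Y ≤ 2 * #S ^ (Fintype.card ι - 1) :=
  card_le_of_quadric (l := 0) (fun y hy => (hY y hy).snd_mem) hx fun y hy => by
    rw [zero_mul, add_zero, (hY y hy).dotProduct_eq hg]

lemma card_snd_le_of_notMem_span [LinearOrder 𝕜] [IsStrictOrderedRing 𝕜] {Y : Finset (ι → 𝕜)}
    (hι : 2 ≤ Fintype.card ι) (hg : g ≠ 0) (hx : x ≠ 0)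
    (hnd : b ≠ 0 ∨ u₂ ∉ Submodule.span 𝕜 {x})
    (hY : ∀ y ∈ Y, IsCoupledPair S u₁ u₂ a g h b x y) :
    #Y ≤ 2 * #S ^ (Fintype.card ι - 2) :=
  card_le_of_hyperplane_of_quadric (κ := -h * (-(u₁ ⬝ᵥ x + a * (x ⬝ᵥ x)) / g)) hι
    (fun y hy => (hY y hy).snd_mem) hx hnd (fun y hy => (hY y hy).dotProduct_eq hg) fun y hy => by
      rw [← (hY y hy).dotProduct_eq hg]
      linear_combination (hY y hy).snd_eq

lemma card_fst_le_of_mem_span {X : Finset (ι → 𝕜)} (hι : 2 ≤ Fintype.card ι) (hh : h ≠ 0)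
    (hu : u₁ ≠ 0 ∨ u₂ ≠ 0)
    (hX : ∀ x ∈ X, x ≠ 0 ∧ u₂ ∈ Submodule.span 𝕜 {x} ∧
      ∃ y, IsCoupledPair S u₁ u₂ a g h 0 x y) :
    #X ≤ 2 * #S ^ (Fintype.card ι - 1) := by
  have hS : ∀ x ∈ X, ∀ i, x i ∈ S := fun x hx =>
    let ⟨_, _, _, hxy⟩ := hX x hx
    hxy.fst_mem
  by_cases hu₂ : u₂ = 0
  · refine card_le_of_quadric (l := a) (κ := 0) hS (hu.resolve_right (not_not.2 hu₂)) fun x hx => ?_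
    obtain ⟨-, -, y, hxy⟩ := hX x hx
    have horth : x ⬝ᵥ y = 0 := by simpa [hu₂, hh] using hxy.snd_eq
    simpa [horth] using hxy.fst_eq
  · have hspan : ∀ x ∈ X, x ∈ Submodule.span 𝕜 {u₂} := fun x hx => by
      obtain ⟨-, hu₂x, -⟩ := hX x hx
      obtain ⟨s, rfl⟩ := Submodule.mem_span_singleton.1 hu₂x
      have hs : s ≠ 0 := (smul_ne_zero_iff.1 hu₂).1
      exact Submodule.mem_span_singleton.2 ⟨s⁻¹, inv_smul_smul₀ hs x⟩
    calc #X ≤ #S := card_le_of_mem_span_singleton hS hu₂ hspan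
      _ ≤ #S ^ (Fintype.card ι - 1) := Nat.le_self_pow (by omega) _
      _ ≤ 2 * #S ^ (Fintype.card ι - 1) := Nat.le_mul_of_pos_left _ two_pos

variable {G : Finset ((ι → 𝕜) × (ι → 𝕜))}

lemma card_le_of_const_fst (hι : 2 ≤ Fintype.card ι)
    (hG : ∀ p ∈ G, IsCoupledPair S u₁ u₂ a g h b p.1 p.2)
    (hfst : ∀ p ∈ G, ∀ q ∈ G, p.1 = q.1) :
    #G ≤ (#S ^ (Fintype.card ι - 1)) ^ 2 := by
  calc #G ≤ #S ^ Fintype.card ι := card_le_pow_of_fst_eq (fun p hp => (hG p hp).snd_mem) hfst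
    _ = #S ^ (Fintype.card ι - 1) * #S := (pow_sub_one_mul (by omega) _).symm
    _ ≤ #S ^ (Fintype.card ι - 1) * #S ^ (Fintype.card ι - 1) := by
      gcongr; exact Nat.le_self_pow (by omega) _
    _ = _ := (sq _).symm

lemma card_le_of_decoupled (hι : 2 ≤ Fintype.card ι) (hu₁ : u₁ ≠ 0) (hu₂ : h ≠ 0 ∨ u₂ ≠ 0)
    (hG : ∀ p ∈ G, IsCoupledPair S u₁ u₂ a 0 h b p.1 p.2) :
    #G ≤ 5 * (#S ^ (Fintype.card ι - 1)) ^ 2 := by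
  classical
  have hdeg : #{p ∈ G | u₂ + h • p.1 = 0} ≤ (#S ^ (Fintype.card ι - 1)) ^ 2 := by
    refine card_le_of_const_fst hι (fun p hp => hG p (mem_filter.1 hp).1) fun p hp q hq => ?_
    have hpq : h • p.1 = h • q.1 :=
      add_left_cancel ((mem_filter.1 hp).2.trans (mem_filter.1 hq).2.symm)
    have hh : h ≠ 0 := hu₂.elim id fun hu₂ h0 => hu₂ (by simpa [h0] using (mem_filter.1 hp).2)
    exact smul_right_injective _ hh hpq
  have hgen : #{p ∈ G | u₂ + h • p.1 ≠ 0} ≤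
      (2 * #S ^ (Fintype.card ι - 1)) * (2 * #S ^ (Fintype.card ι - 1)) := by
    refine card_le_mul_of_fst_of_snd (fun X hX => ?_) fun x Y hY => ?_
    · refine card_le_of_quadric (l := a) (κ := 0) (fun x hx => ?_) hu₁ fun x hx => ?_ <;>
        obtain ⟨y, hy⟩ := hX x hx
      · exact (hG _ (mem_filter.1 hy).1).fst_mem
      · simpa using (hG _ (mem_filter.1 hy).1).fst_eq
    · obtain rfl | ⟨y₀, hy₀⟩ := Y.eq_empty_or_nonempty
      · simp
      refine card_le_of_quadric (l := b) (κ := 0)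
        (fun y hy => (hG _ (mem_filter.1 (hY y hy)).1).snd_mem) (mem_filter.1 (hY y₀ hy₀)).2
        fun y hy => ?_
      rw [add_dotProduct, smul_dotProduct, smul_eq_mul]
      exact (hG _ (mem_filter.1 (hY y hy)).1).snd_eq
  linarith [card_filter_add_card_filter_not (s := G) fun p => u₂ + h • p.1 = 0]

variable [LinearOrder 𝕜] [IsStrictOrderedRing 𝕜]

lemma card_le_of_coupled_of_fst_ne_zero (hι : 2 ≤ Fintype.card ι) (hg : g ≠ 0) (hh : h ≠ 0)
    (hu : u₁ ≠ 0 ∨ u₂ ≠ 0) (hG : ∀ p ∈ G, IsCoupledPair S u₁ u₂ a g h b p.1 p.2)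
    (hfst : ∀ p ∈ G, p.1 ≠ 0) : #G ≤ 6 * (#S ^ (Fintype.card ι - 1)) ^ 2 := by
  classical
  let IsParallel (p : (ι → 𝕜) × (ι → 𝕜)) : Prop := b = 0 ∧ u₂ ∈ Submodule.span 𝕜 {p.1}
  have hparallel : #{p ∈ G | IsParallel p} ≤
      (2 * #S ^ (Fintype.card ι - 1)) * (2 * #S ^ (Fintype.card ι - 1)) := by
    refine card_le_mul_of_fst_of_snd (fun X hX => ?_) fun x Y hY => ?_
    · refine card_fst_le_of_mem_span (a := a) (g := g) hι hh hu fun x hx => ?_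
      obtain ⟨y, hy⟩ := hX x hx
      obtain ⟨hxy, rfl, hspan⟩ := mem_filter.1 hy
      exact ⟨hfst _ hxy, hspan, y, hG _ hxy⟩
    · obtain rfl | ⟨y₀, hy₀⟩ := Y.eq_empty_or_nonempty
      · simp
      exact card_snd_le_of_ne_zero hg (hfst _ (mem_filter.1 (hY y₀ hy₀)).1) fun y hy =>
        hG _ (mem_filter.1 (hY y hy)).1
  have hgeneric : #{p ∈ G | ¬ IsParallel p} ≤
      #S ^ Fintype.card ι * (2 * #S ^ (Fintype.card ι - 2)) := by
    refine card_le_mul_of_fst_of_snd (fun X hX => card_le_pow_card fun x hx => ?_) fun x Y hY => ?_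
    · obtain ⟨y, hy⟩ := hX x hx
      exact (hG _ (mem_filter.1 hy).1).fst_mem
    · obtain rfl | ⟨y₀, hy₀⟩ := Y.eq_empty_or_nonempty
      · simp
      obtain ⟨hxy₀, hnd⟩ := mem_filter.1 (hY y₀ hy₀)
      exact card_snd_le_of_notMem_span hι hg (hfst _ hxy₀) (not_and_or.1 hnd) fun y hy =>
        hG _ (mem_filter.1 (hY y hy)).1
  have hpow : #S ^ Fintype.card ι * #S ^ (Fintype.card ι - 2) =
      (#S ^ (Fintype.card ι - 1)) ^ 2 := by
    rw [← pow_add, ← pow_mul]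
    congr 1
    omega
  linarith [card_filter_add_card_filter_not (s := G) IsParallel]

lemma card_le_of_coupled (hι : 2 ≤ Fintype.card ι) (hg : g ≠ 0) (hh : h ≠ 0)
    (hu : u₁ ≠ 0 ∨ u₂ ≠ 0) (hG : ∀ p ∈ G, IsCoupledPair S u₁ u₂ a g h b p.1 p.2) :
    #G ≤ 7 * (#S ^ (Fintype.card ι - 1)) ^ 2 := by
  classical
  have hzero : #{p ∈ G | p.1 = 0} ≤ (#S ^ (Fintype.card ι - 1)) ^ 2 :=
    card_le_of_const_fst hι (fun p hp => hG p (mem_filter.1 hp).1) fun p hp q hq =>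
      (mem_filter.1 hp).2.trans (mem_filter.1 hq).2.symm
  have hne_zero : #{p ∈ G | p.1 ≠ 0} ≤ 6 * (#S ^ (Fintype.card ι - 1)) ^ 2 :=
    card_le_of_coupled_of_fst_ne_zero hι hg hh hu (fun p hp => hG p (mem_filter.1 hp).1)
      fun p hp => (mem_filter.1 hp).2
  linarith [card_filter_add_card_filter_not (s := G) (·.1 = 0)]

lemma card_le_of_isCoupledPair (hι : 2 ≤ Fintype.card ι) (h₁ : g ≠ 0 ∨ u₁ ≠ 0)
    (h₂ : h ≠ 0 ∨ u₂ ≠ 0) (hu : u₁ ≠ 0 ∨ u₂ ≠ 0)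
    (hG : ∀ p ∈ G, IsCoupledPair S u₁ u₂ a g h b p.1 p.2) :
    #G ≤ 7 * (#S ^ (Fintype.card ι - 1)) ^ 2 := by
  by_cases hg : g = 0
  · subst hg
    have := card_le_of_decoupled hι (h₁.resolve_left (not_not.2 rfl)) h₂ hG
    linarith
  by_cases hh : h = 0
  · subst hh
    have hswap : ∀ p ∈ G.map (Equiv.prodComm _ _).toEmbedding,
        IsCoupledPair S u₂ u₁ b 0 g a p.1 p.2 := by
      simpa using fun y x hxy => (hG (x, y) hxy).swap
    have := card_le_of_decoupled hι (h₂.resolve_left (not_not.2 rfl)) h₁ hswap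
    rw [card_map] at this
    linarith
  · exact card_le_of_coupled hι hg hh hu hG

end CoupledPairs

/-! ### Quadratic systems on a grid -/

section GridSystems

open Finset

/-- Nondegeneracy of the quadratic system `w j ⬝ᵥ (u j + ∑ m, c j m • w m) = 0`: no nonempty set `J`
of its equations is homogeneous and involves the variables indexed by `J` only. -/
def IsNondegenerate {κ ι 𝕜 : Type*} [Zero 𝕜] (u : κ → ι → 𝕜) (c : Matrix κ κ 𝕜) : Prop :=
  ∀ J : Finset κ, J.Nonempty → ∃ j ∈ J, u j ≠ 0 ∨ ∃ m ∉ J, c j m ≠ 0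

variable {κ ι 𝕜 : Type*} [Fintype κ] [Fintype ι] [Field 𝕜] {S : Finset 𝕜}

open Classical in
/-- The solutions of the quadratic system `w j ⬝ᵥ (u j + ∑ m, c j m • w m) = 0` all of whose
coordinates lie in the finite set `S`. -/
def gridSolutions (S : Finset 𝕜) (u : κ → ι → 𝕜) (c : Matrix κ κ 𝕜) : Finset (κ → ι → 𝕜) :=
  {w ∈ Fintype.piFinset fun _ => Fintype.piFinset fun _ => S |
    ∀ j, w j ⬝ᵥ (u j + ∑ m, c j m • w m) = 0}

lemma mem_gridSolutions {u : κ → ι → 𝕜} {c : Matrix κ κ 𝕜} {w : κ → ι → 𝕜} :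
    w ∈ gridSolutions S u c ↔
      (∀ j i, w j i ∈ S) ∧ ∀ j, w j ⬝ᵥ (u j + ∑ m, c j m • w m) = 0 := by
  simp [gridSolutions]

lemma card_gridSolutions_one_le {u : Fin 1 → ι → 𝕜} {c : Matrix (Fin 1) (Fin 1) 𝕜}
    (h : IsNondegenerate u c) :
    #(gridSolutions S u c) ≤ 2 * #S ^ (Fintype.card ι - 1) := by
  classical
  have hu : u 0 ≠ 0 := by simpa [Fin.forall_fin_one] using h univ univ_nonempty
  rw [← card_map (Equiv.funUnique (Fin 1) (ι → 𝕜)).toEmbedding]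
  refine card_le_of_quadric (p := u 0) (l := c 0 0) (κ := 0) (fun y hy => ?_) hu fun y hy => ?_ <;>
    obtain ⟨w, hw, rfl⟩ := mem_map.1 hy <;> obtain ⟨hS, heq⟩ := mem_gridSolutions.1 hw
  · exact hS 0
  · simpa [dotProduct_comm (w 0) (u 0)] using heq 0

lemma card_gridSolutions_two_le [LinearOrder 𝕜] [IsStrictOrderedRing 𝕜] {u : Fin 2 → ι → 𝕜}
    {c : Matrix (Fin 2) (Fin 2) 𝕜} (hι : 2 ≤ Fintype.card ι) (h : IsNondegenerate u c) :
    #(gridSolutions S u c) ≤ 7 * (#S ^ (Fintype.card ι - 1)) ^ 2 := by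
  classical
  have h₁ : c 0 1 ≠ 0 ∨ u 0 ≠ 0 := by simpa [or_comm] using h {0} (singleton_nonempty _)
  have h₂ : c 1 0 ≠ 0 ∨ u 1 ≠ 0 := by simpa [or_comm] using h {1} (singleton_nonempty _)
  have hu : u 0 ≠ 0 ∨ u 1 ≠ 0 := by simpa using h univ univ_nonempty
  rw [← card_map (finTwoArrowEquiv (ι → 𝕜)).toEmbedding]
  refine card_le_of_isCoupledPair hι (a := c 0 0) (b := c 1 1) h₁ h₂ hu fun p hp => ?_
  obtain ⟨w, hw, rfl⟩ := mem_map.1 hp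
  obtain ⟨hS, heq⟩ := mem_gridSolutions.1 hw
  have h0 := heq 0
  have h1 := heq 1
  simp only [Fin.sum_univ_two, dotProduct_add, dotProduct_smul, smul_eq_mul] at h0 h1
  rw [dotProduct_comm _ (u _)] at h0 h1
  rw [dotProduct_comm (w 1) (w 0)] at h1
  refine ⟨hS 0, hS 1, ?_, ?_⟩
  · change u 0 ⬝ᵥ w 0 + c 0 1 * (w 0 ⬝ᵥ w 1) + c 0 0 * (w 0 ⬝ᵥ w 0) = 0
    linear_combination h0
  · change u 1 ⬝ᵥ w 1 + c 1 0 * (w 0 ⬝ᵥ w 1) + c 1 1 * (w 1 ⬝ᵥ w 1) = 0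
    linear_combination h1

lemma card_gridSolutions_le [LinearOrder 𝕜] [IsStrictOrderedRing 𝕜] {n : ℕ} (hn : n ≤ 2)
    {u : Fin n → ι → 𝕜} {c : Matrix (Fin n) (Fin n) 𝕜} (hι : 2 ≤ Fintype.card ι)
    (h : IsNondegenerate u c) :
    #(gridSolutions S u c) ≤ 2 ^ (n * Fintype.card ι) * #S ^ (n * (Fintype.card ι - 1)) := by
  interval_cases n
  · simpa using card_le_one_of_subsingleton (gridSolutions S u c)
  · rw [one_mul, one_mul]
    refine (card_gridSolutions_one_le h).trans ?_
    gcongr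
    exact Nat.le_self_pow (by omega) 2
  · rw [mul_comm 2 (_ - 1), pow_mul _ _ 2]
    refine (card_gridSolutions_two_le hι h).trans ?_
    gcongr
    calc 7 ≤ 2 ^ (2 * 2) := by norm_num
      _ ≤ 2 ^ (2 * Fintype.card ι) := by gcongr; norm_num

end GridSystems

/-! ### Lattice points of an interval -/

section LatticeInterval

variable {R L : ℝ}

/-- The points of the scaled lattice `L⁻¹ℤ` in the open interval `(-R, R)`. -/
def latticeInterval (R L : ℝ) : Finset ℝ :=
  (Finset.Ioo ⌊-(R * L)⌋ ⌈R * L⌉).image fun c : ℤ => (c : ℝ) / L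

lemma mem_latticeInterval (hL : 0 < L) {t : ℝ} :
    t ∈ latticeInterval R L ↔ (∃ c : ℤ, t = c / L) ∧ |t| < R := by
  have hbound (c : ℤ) : |(c : ℝ) / L| < R ↔ ⌊-(R * L)⌋ < c ∧ c < ⌈R * L⌉ := by
    rw [abs_div, abs_of_pos hL, div_lt_iff₀ hL, abs_lt, Int.floor_lt, Int.lt_ceil]
  simp only [latticeInterval, Finset.mem_image, Finset.mem_Ioo]
  constructor
  · rintro ⟨c, hc, rfl⟩
    exact ⟨⟨c, rfl⟩, (hbound c).2 hc⟩
  · rintro ⟨⟨c, rfl⟩, ht⟩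
    exact ⟨c, (hbound c).1 ht, rfl⟩

lemma card_latticeInterval_le (hRL : 0 ≤ R * L) :
    ((latticeInterval R L).card : ℝ) ≤ 2 * (R * L) + 1 := by
  have hcard : (latticeInterval R L).card ≤ (⌈R * L⌉ - ⌊-(R * L)⌋ - 1).toNat := by
    rw [← Int.card_Ioo]
    exact Finset.card_image_le
  have hceil := Int.ceil_lt_add_one (R * L)
  have hint : (((⌈R * L⌉ - ⌊-(R * L)⌋ - 1).toNat : ℤ) : ℝ) ≤ 2 * (R * L) + 1 := by
    rw [Int.toNat_eq_max, Int.floor_neg]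
    push_cast
    exact max_le (by linarith) (by linarith)
  exact (Nat.cast_le.2 hcard).trans (by exact_mod_cast hint)

end LatticeInterval

/-! ### The system attached to a matrix -/

section Reduction

variable {d N : ℕ} {α : Matrix (Fin N) (Fin N) ℤ} {z₁ v : Ed d} {L R : ℝ}

lemma linearIndependent_pair_of_inner_eq_zero {𝕜 E : Type*} [RCLike 𝕜] [NormedAddCommGroup E]
    [InnerProductSpace 𝕜 E] {x y : E} (hx : x ≠ 0) (hy : y ≠ 0) (h : inner 𝕜 x y = 0) :
    LinearIndependent 𝕜 ![x, y] := by
  have h' : inner 𝕜 y x = 0 := inner_eq_zero_symm.1 h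
  refine linearIndependent_of_ne_zero_of_inner_eq_zero (by simp [Fin.forall_fin_two, hx, hy]) ?_
  simp [Pairwise, Fin.forall_fin_two, h, h']

/-- The vector `α_{j1} z₁ + α_{jN} v`, the part of the second factor of `q_j` that does not depend
on `z₂, …, z_{N-1}`. -/
def source (α : Matrix (Fin N) (Fin N) ℤ) (z₁ v : Ed d) : Fin (N - 2) → Fin d → ℝ := fun j i =>
  (α (embIdx N j) (oneIdx N j) : ℝ) * z₁ i + (α (embIdx N j) (lastIdx N j) : ℝ) * v i

/-- The coefficient `α_{jm} - α_{jN} α_{1m}` of `z_m` in the second factor of `q_j`. -/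
def coupling (α : Matrix (Fin N) (Fin N) ℤ) : Matrix (Fin (N - 2)) (Fin (N - 2)) ℝ := fun j m =>
  (α (embIdx N j) (embIdx N m) : ℝ) -
    (α (embIdx N j) (lastIdx N j) : ℝ) * (α (oneIdx N j) (embIdx N m) : ℝ)

lemma qpoly_eq_dotProduct (w : Fin (N - 2) → Ed d) (j : Fin (N - 2)) :
    qpoly α z₁ v w j = (w j).ofLp ⬝ᵥ (source α z₁ v j + ∑ m, coupling α j m • (w m).ofLp) := by
  simp [qpoly, dotProduct, source, coupling, Finset.sum_apply]

lemma eq_oneIdx_or_eq_lastIdx_or_exists_embIdx (j : Fin (N - 2)) (k : Fin N) :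
    k = oneIdx N j ∨ k = lastIdx N j ∨ ∃ m, k = embIdx N m := by
  have hj := j.2
  have hk := k.2
  simp only [oneIdx, lastIdx, embIdx, Fin.ext_iff]
  by_cases h0 : (k : ℕ) = 0
  · exact Or.inl h0
  by_cases hlast : (k : ℕ) = N - 1
  · exact Or.inr (Or.inl hlast)
  · exact Or.inr (Or.inr ⟨⟨k - 1, by omega⟩, by simp; omega⟩)

lemma source_eq_zero_iff (hzv : LinearIndependent ℝ ![z₁, v]) (j : Fin (N - 2)) :
    source α z₁ v j = 0 ↔
      α (embIdx N j) (oneIdx N j) = 0 ∧ α (embIdx N j) (lastIdx N j) = 0 := by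
  refine ⟨fun h => ?_, fun ⟨h₁, h₂⟩ => funext fun i => by simp [source, h₁, h₂]⟩
  have hcomb : (α (embIdx N j) (oneIdx N j) : ℝ) • z₁ +
      (α (embIdx N j) (lastIdx N j) : ℝ) • v = 0 := by
    ext i
    simpa [source] using congrFun h i
  simpa using LinearIndependent.pair_iff.1 hzv _ _ hcomb

lemma IrredMat.isNondegenerate (hirr : IrredMat α) (hzv : LinearIndependent ℝ ![z₁, v]) :
    IsNondegenerate (source α z₁ v) (coupling α) := by
  intro J ⟨j₀, hj₀⟩
  have hproper : J.image (embIdx N) ≠ Finset.univ := fun h => by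
    obtain ⟨m, -, hm⟩ := Finset.mem_image.1 (h ▸ Finset.mem_univ (oneIdx N j₀))
    simp [embIdx, oneIdx] at hm
  obtain ⟨i, hi, k, hk, hik⟩ := hirr _ ⟨_, Finset.mem_image_of_mem _ hj₀⟩ hproper
  obtain ⟨j, hj, rfl⟩ := Finset.mem_image.1 hi
  refine ⟨j, hj, or_iff_not_imp_left.2 fun hsource => ?_⟩
  obtain ⟨hone, hlast⟩ := (source_eq_zero_iff hzv j).1 (not_not.1 hsource)
  obtain rfl | rfl | ⟨m, rfl⟩ := eq_oneIdx_or_eq_lastIdx_or_exists_embIdx j k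
  · exact absurd hone hik
  · exact absurd hlast hik
  · exact ⟨m, fun hm => Finset.mem_compl.1 hk (Finset.mem_image_of_mem _ hm),
      by simpa [coupling, hlast] using hik⟩

lemma mem_QtildeSet_iff_mem_gridSolutions (hL : 0 < L) {w : Fin (N - 2) → Ed d} :
    w ∈ QtildeSet α L z₁ v R ↔
      (fun j => (w j).ofLp) ∈ gridSolutions (latticeInterval R L) (source α z₁ v) (coupling α) := by
  simp only [QtildeSet, Set.mem_ofPred_eq, mem_gridSolutions, mem_latticeInterval hL,
    qpoly_eq_dotProduct, forall_and]
  tauto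

lemma QtildeSet_finite_and_ncard_le (hL : 0 < L) :
    (QtildeSet α L z₁ v R).Finite ∧ (QtildeSet α L z₁ v R).ncard ≤
      (gridSolutions (latticeInterval R L) (source α z₁ v) (coupling α)).card := by
  have hmaps : ∀ w ∈ QtildeSet α L z₁ v R, (fun j => (w j).ofLp) ∈
      (gridSolutions (latticeInterval R L) (source α z₁ v) (coupling α) : Set _) := fun w hw =>
    (mem_QtildeSet_iff_mem_gridSolutions hL).1 hw
  have hinj : Set.InjOn (fun (w : Fin (N - 2) → Ed d) j => (w j).ofLp) (QtildeSet α L z₁ v R) :=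
    fun w _ w' _ h => funext fun j => WithLp.ofLp_injective 2 (congrFun h j)
  refine ⟨Set.Finite.of_injOn hmaps hinj (Finset.finite_toSet _), ?_⟩
  rw [← Set.ncard_coe_finset]
  exact Set.ncard_le_ncard_of_injOn _ hmaps hinj (Finset.finite_toSet _)

lemma card_latticeInterval_pow_le (hRL : 1 ≤ R * L) (k : ℕ) :
    ((latticeInterval R L).card : ℝ) ^ ((N - 2) * k) ≤ ((N : ℝ) * R * L) ^ ((N - 2) * k) := by
  obtain hN | hN := le_or_gt N 2
  · simp [Nat.sub_eq_zero_of_le hN]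
  · have hN' : (3 : ℝ) ≤ N := by exact_mod_cast hN
    gcongr
    calc ((latticeInterval R L).card : ℝ) ≤ 2 * (R * L) + 1 := card_latticeInterval_le (by linarith)
      _ ≤ 3 * (R * L) := by linarith
      _ ≤ N * (R * L) := by gcongr
      _ = N * R * L := (mul_assoc _ _ _).symm

end Reduction

theorem statement4_general {d N : ℕ} (hN : N = 2 ∨ N = 3 ∨ N = 4) {α : Matrix (Fin N) (Fin N) ℤ}
    (hirr : IrredMat α) {R L : ℝ} (hL : 0 < L) (hRL : 1 ≤ R * L) {z₁ v : Ed d}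
    (hzv : LinearIndependent ℝ ![z₁, v]) :
    (QtildeSet α L z₁ v R).Finite ∧
      ((QtildeSet α L z₁ v R).ncard : ℝ) ≤
        2 ^ ((N - 2) * d) * ((N : ℝ) * R * L) ^ ((N - 2) * (d - 1)) := by
  have hd : 2 ≤ d := by simpa using hzv.fintype_card_le_finrank
  obtain ⟨hfinite, hncard⟩ := QtildeSet_finite_and_ncard_le (α := α) (z₁ := z₁) (v := v) (R := R) hL
  have hgrid := card_gridSolutions_le (S := latticeInterval R L) (by omega : N - 2 ≤ 2)
    (by simpa using hd) (hirr.isNondegenerate hzv)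
  rw [Fintype.card_fin] at hgrid
  refine ⟨hfinite, ?_⟩
  calc ((QtildeSet α L z₁ v R).ncard : ℝ)
      ≤ 2 ^ ((N - 2) * d) * ((latticeInterval R L).card : ℝ) ^ ((N - 2) * (d - 1)) := by
        exact_mod_cast hncard.trans hgrid
    _ ≤ 2 ^ ((N - 2) * d) * ((N : ℝ) * R * L) ^ ((N - 2) * (d - 1)) := by
        gcongr ?_ * ?_
        exact card_latticeInterval_pow_le hRL _

theorem statement4 (d N : ℕ) (hd : 2 ≤ d) (hN : N = 2 ∨ N = 3 ∨ N = 4)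
    (α : Matrix (Fin N) (Fin N) ℤ) (hskew : α.transpose = -α)
    (hentries : ∀ i j, α i j = -1 ∨ α i j = 0 ∨ α i j = 1)
    (hirr : IrredMat α) (hα1N : α ⟨0, by omega⟩ ⟨N - 1, by omega⟩ = 1)
    (R L : ℝ) (hR : 1 ≤ R) (hL : 2 ≤ L)
    (z₁ v : Ed d) (k₁ kv : Fin d → ℤ)
    (hz₁ : ∀ i, z₁ i = (k₁ i : ℝ) / L) (hv : ∀ i, v i = (kv i : ℝ) / L)
    (hz0 : z₁ ≠ 0) (hv0 : v ≠ 0) (hdot : ∑ i, z₁ i * v i = 0)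
    (hbox : ∀ i, |z₁ i| < ((N : ℝ) - 1) * R ∧ |v i| < ((N : ℝ) - 1) * R) :
    (QtildeSet α L z₁ v R).Finite ∧
      ((QtildeSet α L z₁ v R).ncard : ℝ) ≤
        2 ^ ((N - 2) * d) * ((N : ℝ) * R * L) ^ ((N - 2) * (d - 1)) := by
  have hRL : 1 ≤ R * L := by nlinarith
  have horth : inner ℝ z₁ v = 0 := by simpa [PiLp.inner_apply, mul_comm] using hdot
  exact statement4_general hN hirr (by linarith) hRL
    (linearIndependent_pair_of_inner_eq_zero hz0 hv0 horth)
end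
end

section
/- Let d ≥ 1. There is an absolute constant C such that for every j ∈ {1,2,3,4}, every τ ≥ 0 and every s⃗ = (s₁,s₂,s₃,s₄) ∈ (R^d)^4, one has |Z^j(τ; s⃗) − 1/γ_{1234}| ≤ C·e^{−2τ}, where γ_{1234} := γ_{s₁}+γ_{s₂}+γ_{s₃}+γ_{s₄}. -/
/-!
Let `n` be the number of weights, all of them at least `a > 0`, and `G` their sum. For
`0 ≤ x ≤ y` the quotient `sinh x / sinh y` is `exp (x - y)` up to a factor in `[1 - exp (-2 x), 1]`,
so by Bernoulli's inequality the integrand of the kernel is `exp (-G (τ - l))` up to a factor in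
`[1 - (n - 1) exp (-2 a l), 1]`. The main term integrates to `(1 - exp (-G τ)) / G`. Since
`G ≥ n a`, the error is at most `(n - 1) exp (-2 a τ) exp (-(n - 2) a (τ - l))`, and integrating the
last factor costs no more than `1 / ((n - 2) a)` as soon as `n > 2`.
-/

open MeasureTheory Real

noncomputable section

/-- the kernel `Z^j(τ; s⃗)`, expressed in terms of `γ_m := γ⁰(|s_m|²)`, `m = 1,…,4`. -/
def Zker (γ : Fin 4 → ℝ) (j : Fin 4) (τ : ℝ) : ℝ :=
  if τ = 0 then 0 else
    ∫ l in (0 : ℝ)..τ, Real.exp (-(γ j) * (τ - l)) *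
      ∏ m ∈ Finset.univ \ {j}, Real.sinh (γ m * l) / Real.sinh (γ m * τ)

lemma sinh_div_sinh_le_exp_sub {x y : ℝ} (hxy : x ≤ y) (hy : 0 < y) :
    sinh x / sinh y ≤ exp (x - y) := by
  have hexp : exp (x - y - y) ≤ exp (-x) := exp_le_exp.2 (by linarith)
  rw [div_le_iff₀ (sinh_pos_iff.2 hy), sinh_eq, sinh_eq, mul_div_assoc', mul_sub, ← exp_add,
    ← exp_add, sub_add_cancel, ← sub_eq_add_neg]
  linarith

lemma exp_sub_mul_le_sinh_div_sinh {x y : ℝ} (hx : 0 ≤ x) (hy : 0 < y) :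
    exp (x - y) * (1 - exp (-2 * x)) ≤ sinh x / sinh y := by
  have htwo_sinh : exp (x - y) * (1 - exp (-2 * x)) = 2 * sinh x / exp y := by
    rw [sinh_eq, mul_div_cancel₀ _ two_ne_zero, exp_sub, div_mul_eq_mul_div, mul_sub, mul_one,
      ← exp_add]
    ring_nf
  have hsinh_le : 2 * sinh y ≤ exp y := by linarith [sinh_eq y, exp_pos (-y)]
  rw [htwo_sinh, div_le_div_iff₀ (exp_pos y) (sinh_pos_iff.2 hy)]
  calc 2 * sinh x * sinh y = sinh x * (2 * sinh y) := by ring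
    _ ≤ sinh x * exp y := mul_le_mul_of_nonneg_left hsinh_le (sinh_nonneg_iff.2 hx)

section HyperbolicQuotients

variable {ι : Type*} {s : Finset ι} {x y : ι → ℝ}

lemma prod_sinh_div_sinh_le_exp_sum_sub (hx : ∀ m ∈ s, 0 ≤ x m) (hxy : ∀ m ∈ s, x m ≤ y m)
    (hy : ∀ m ∈ s, 0 < y m) :
    ∏ m ∈ s, sinh (x m) / sinh (y m) ≤ exp (∑ m ∈ s, (x m - y m)) := by
  rw [exp_sum]
  exact Finset.prod_le_prod
    (fun m hm => div_nonneg (sinh_nonneg_iff.2 (hx m hm)) (sinh_nonneg_iff.2 (hy m hm).le))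
    (fun m hm => sinh_div_sinh_le_exp_sub (hxy m hm) (hy m hm))

lemma exp_sum_sub_mul_le_prod_sinh_div_sinh {b : ℝ} (hb : 0 ≤ b) (hx : ∀ m ∈ s, b ≤ x m)
    (hy : ∀ m ∈ s, 0 < y m) :
    exp (∑ m ∈ s, (x m - y m)) * (1 - s.card * exp (-2 * b)) ≤
      ∏ m ∈ s, sinh (x m) / sinh (y m) := by
  have hexp_le_one : exp (-2 * b) ≤ 1 := exp_le_one_iff.2 (by linarith)
  have bernoulli : 1 - s.card * exp (-2 * b) ≤ (1 - exp (-2 * b)) ^ s.card := by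
    simpa only [mul_neg, ← sub_eq_add_neg] using
      one_add_mul_le_pow (show -2 ≤ -exp (-2 * b) by linarith) s.card
  calc exp (∑ m ∈ s, (x m - y m)) * (1 - s.card * exp (-2 * b))
      ≤ exp (∑ m ∈ s, (x m - y m)) * (1 - exp (-2 * b)) ^ s.card := by gcongr
    _ = ∏ m ∈ s, exp (x m - y m) * (1 - exp (-2 * b)) := by
        rw [Finset.prod_mul_distrib, Finset.prod_const, exp_sum]
    _ ≤ ∏ m ∈ s, sinh (x m) / sinh (y m) := by
        refine Finset.prod_le_prod
          (fun m _ => mul_nonneg (exp_pos _).le (sub_nonneg.2 hexp_le_one)) fun m hm => ?_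
        have hexp_mono : exp (-2 * x m) ≤ exp (-2 * b) := exp_le_exp.2 (by linarith [hx m hm])
        exact (mul_le_mul_of_nonneg_left (by linarith) (exp_pos _).le).trans
          (exp_sub_mul_le_sinh_div_sinh (hb.trans (hx m hm)) (hy m hm))

end HyperbolicQuotients

lemma integral_exp_neg_mul_sub {c : ℝ} (hc : c ≠ 0) (τ : ℝ) :
    ∫ l in (0 : ℝ)..τ, exp (-c * (τ - l)) = (1 - exp (-c * τ)) / c := by
  rw [intervalIntegral.integral_comp_sub_left (fun u => exp (-c * u)) τ, sub_self, sub_zero,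
    intervalIntegral.integral_comp_mul_left (fun u => exp u) (neg_ne_zero.2 hc), integral_exp,
    mul_zero, exp_zero, smul_eq_mul]
  field_simp
  ring

lemma card_mul_le_sum {ι : Type*} [Fintype ι] {f : ι → ℝ} {a : ℝ} (hf : ∀ i, a ≤ f i) :
    Fintype.card ι * a ≤ ∑ i, f i := by
  simpa only [nsmul_eq_mul, Finset.card_univ] using
    Finset.card_nsmul_le_sum Finset.univ f a fun i _ => hf i

section Kernel

variable {ι : Type*} [Fintype ι] [DecidableEq ι] {γ : ι → ℝ} {a l τ : ℝ}

/-- The integrand of the kernel `Z^j(τ)`, for an arbitrary finite family of weights `γ`. -/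
def sinhKernelIntegrand (γ : ι → ℝ) (j : ι) (τ l : ℝ) : ℝ :=
  exp (-(γ j) * (τ - l)) * ∏ m ∈ Finset.univ \ {j}, sinh (γ m * l) / sinh (γ m * τ)

/-- The kernel `Z^j(τ)` for an arbitrary finite family of weights `γ`. The value at `τ = 0` needs no
separate clause, as the integral over a degenerate interval is `0`. -/
def sinhKernel (γ : ι → ℝ) (j : ι) (τ : ℝ) : ℝ :=
  ∫ l in (0 : ℝ)..τ, sinhKernelIntegrand γ j τ l

lemma Zker_eq_sinhKernel (γ : Fin 4 → ℝ) (j : Fin 4) (τ : ℝ) :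
    Zker γ j τ = sinhKernel γ j τ := by
  unfold Zker
  split_ifs with hτ
  · rw [hτ, sinhKernel, intervalIntegral.integral_same]
  · rfl

lemma continuous_sinhKernelIntegrand (γ : ι → ℝ) (j : ι) (τ : ℝ) :
    Continuous (sinhKernelIntegrand γ j τ) := by
  unfold sinhKernelIntegrand
  fun_prop

lemma exp_mul_exp_sum_sdiff (γ : ι → ℝ) (j : ι) (τ l : ℝ) :
    exp (-(γ j) * (τ - l)) * exp (∑ m ∈ Finset.univ \ {j}, (γ m * l - γ m * τ)) =
      exp (-(∑ m, γ m) * (τ - l)) := by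
  simp only [← exp_add, ← mul_sub, ← Finset.sum_mul,
    Finset.sum_eq_add_sum_sdiff_singleton_of_mem (Finset.mem_univ j) γ]
  ring_nf

lemma sinhKernelIntegrand_le (hγ : ∀ m, 0 < γ m) (j : ι) (hl : 0 ≤ l) (hlτ : l ≤ τ)
    (hτ : 0 < τ) :
    sinhKernelIntegrand γ j τ l ≤ exp (-(∑ m, γ m) * (τ - l)) := by
  rw [← exp_mul_exp_sum_sdiff γ j]
  exact mul_le_mul_of_nonneg_left (prod_sinh_div_sinh_le_exp_sum_sub
    (fun m _ => mul_nonneg (hγ m).le hl) (fun m _ => mul_le_mul_of_nonneg_left hlτ (hγ m).le)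
    (fun m _ => mul_pos (hγ m) hτ)) (exp_pos _).le

lemma le_sinhKernelIntegrand (ha : 0 < a) (hγ : ∀ m, a ≤ γ m) (j : ι) (hl : 0 ≤ l) (hlτ : l ≤ τ)
    (hτ : 0 < τ) :
    exp (-(∑ m, γ m) * (τ - l)) -
        (Fintype.card ι - 1) * exp (-2 * a * τ) * exp (-((Fintype.card ι - 2) * a) * (τ - l)) ≤
      sinhKernelIntegrand γ j τ l := by
  have hcard : ((Finset.univ \ {j} : Finset ι).card : ℝ) = Fintype.card ι - 1 := by
    rw [Finset.cast_card_sdiff (Finset.subset_univ _), Finset.card_univ, Finset.card_singleton,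
      Nat.cast_one]
  have hcard_nonneg : (0 : ℝ) ≤ Fintype.card ι - 1 := hcard ▸ Nat.cast_nonneg _
  have herror : exp (-(∑ m, γ m) * (τ - l)) * exp (-2 * (a * l)) ≤
      exp (-2 * a * τ) * exp (-((Fintype.card ι - 2) * a) * (τ - l)) := by
    rw [← exp_add, ← exp_add, exp_le_exp]
    linarith [mul_le_mul_of_nonneg_right (card_mul_le_sum hγ) (sub_nonneg.2 hlτ)]
  have hprod := exp_sum_sub_mul_le_prod_sinh_div_sinh (s := Finset.univ \ {j})
    (mul_nonneg ha.le hl) (fun m _ => mul_le_mul_of_nonneg_right (hγ m) hl)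
    (fun m _ => mul_pos (ha.trans_le (hγ m)) hτ)
  rw [hcard] at hprod
  calc exp (-(∑ m, γ m) * (τ - l)) -
        (Fintype.card ι - 1) * exp (-2 * a * τ) * exp (-((Fintype.card ι - 2) * a) * (τ - l))
      ≤ exp (-(∑ m, γ m) * (τ - l)) * (1 - (Fintype.card ι - 1) * exp (-2 * (a * l))) := by
        linarith [mul_le_mul_of_nonneg_left herror hcard_nonneg]
    _ ≤ sinhKernelIntegrand γ j τ l := by
        rw [← exp_mul_exp_sum_sdiff γ j, mul_assoc]
        exact mul_le_mul_of_nonneg_left hprod (exp_pos _).le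

lemma sinhKernel_le (hγ : ∀ m, 0 < γ m) (j : ι) (hτ : 0 ≤ τ) :
    sinhKernel γ j τ ≤ 1 / ∑ m, γ m := by
  have hsum : 0 < ∑ m, γ m := Finset.sum_pos (fun m _ => hγ m) ⟨j, Finset.mem_univ j⟩
  calc sinhKernel γ j τ
      ≤ ∫ l in (0 : ℝ)..τ, exp (-(∑ m, γ m) * (τ - l)) :=
        intervalIntegral.integral_mono_on_of_le_Ioo hτ
          ((continuous_sinhKernelIntegrand γ j τ).intervalIntegrable _ _)
          (Continuous.intervalIntegrable (by fun_prop) _ _)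
          fun l hl => sinhKernelIntegrand_le hγ j hl.1.le hl.2.le (hl.1.trans hl.2)
    _ = (1 - exp (-(∑ m, γ m) * τ)) / ∑ m, γ m := integral_exp_neg_mul_sub hsum.ne' τ
    _ ≤ 1 / ∑ m, γ m :=
        div_le_div_of_nonneg_right (sub_le_self _ (exp_pos _).le) hsum.le

lemma le_sinhKernel (hι : Fintype.card ι ≠ 2) (ha : 0 < a) (hγ : ∀ m, a ≤ γ m) (j : ι)
    (hτ : 0 ≤ τ) :
    (1 - exp (-(∑ m, γ m) * τ)) / ∑ m, γ m -
        (Fintype.card ι - 1) / ((Fintype.card ι - 2) * a) * exp (-2 * a * τ) *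
          (1 - exp (-((Fintype.card ι - 2) * a) * τ)) ≤
      sinhKernel γ j τ := by
  have hsum : 0 < ∑ m, γ m :=
    Finset.sum_pos (fun m _ => ha.trans_le (hγ m)) ⟨j, Finset.mem_univ j⟩
  have hrate : (Fintype.card ι - 2) * a ≠ 0 :=
    mul_ne_zero (sub_ne_zero.2 (by exact_mod_cast hι)) ha.ne'
  have hmono := intervalIntegral.integral_mono_on_of_le_Ioo (μ := volume) hτ
    (Continuous.intervalIntegrable (by fun_prop) _ _)
    ((continuous_sinhKernelIntegrand γ j τ).intervalIntegrable _ _)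
    fun l hl => le_sinhKernelIntegrand ha hγ j hl.1.le hl.2.le (hl.1.trans hl.2)
  rw [intervalIntegral.integral_sub (Continuous.intervalIntegrable (by fun_prop) _ _)
    (Continuous.intervalIntegrable (by fun_prop) _ _), intervalIntegral.integral_const_mul,
    integral_exp_neg_mul_sub hsum.ne', integral_exp_neg_mul_sub hrate] at hmono
  refine le_of_eq_of_le ?_ hmono
  ring

lemma one_div_sub_le_sinhKernel (hι : 2 < Fintype.card ι) (ha : 0 < a) (hγ : ∀ m, a ≤ γ m)
    (j : ι) (hτ : 0 ≤ τ) :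
    1 / ∑ m, γ m - (Fintype.card ι - 1) / ((Fintype.card ι - 2) * a) * exp (-2 * a * τ) ≤
      sinhKernel γ j τ := by
  have hcard : (2 : ℝ) < Fintype.card ι := by exact_mod_cast hι
  have hsum_ge := card_mul_le_sum hγ
  have hsum : 0 < ∑ m, γ m :=
    Finset.sum_pos (fun m _ => ha.trans_le (hγ m)) ⟨j, Finset.mem_univ j⟩
  have hinv_le : 1 / ∑ m, γ m ≤ (Fintype.card ι - 1) / ((Fintype.card ι - 2) * a) :=
    div_le_div₀ (by linarith) (by linarith) (mul_pos (sub_pos.2 hcard) ha) (by linarith)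
  have hexp_le : exp (-(∑ m, γ m) * τ) ≤
      exp (-2 * a * τ) * exp (-((Fintype.card ι - 2) * a) * τ) := by
    rw [← exp_add, exp_le_exp]
    linarith [mul_le_mul_of_nonneg_right hsum_ge hτ]
  have htail : exp (-(∑ m, γ m) * τ) / ∑ m, γ m ≤
      (Fintype.card ι - 1) / ((Fintype.card ι - 2) * a) *
        (exp (-2 * a * τ) * exp (-((Fintype.card ι - 2) * a) * τ)) := by
    rw [← one_div_mul_eq_div]
    exact mul_le_mul hinv_le hexp_le (exp_pos _).le ((one_div_pos.2 hsum).le.trans hinv_le)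
  have hlower := le_sinhKernel hι.ne' ha hγ j hτ
  rw [sub_div] at hlower
  linarith

end Kernel

theorem statement9_general {ι : Type*} [Fintype ι] [DecidableEq ι] (hι : 2 < Fintype.card ι)
    {γ : ι → ℝ} {a : ℝ} (ha : 0 < a) (hγ : ∀ m, a ≤ γ m) (j : ι) {τ : ℝ} (hτ : 0 ≤ τ) :
    |sinhKernel γ j τ - 1 / ∑ m, γ m| ≤
      (Fintype.card ι - 1) / ((Fintype.card ι - 2) * a) * exp (-2 * a * τ) := by
  have hlower := one_div_sub_le_sinhKernel hι ha hγ j hτ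
  have hupper := sinhKernel_le (fun m => ha.trans_le (hγ m)) j hτ
  rw [abs_of_nonpos (sub_nonpos.2 hupper)]
  linarith

theorem statement9 (d : ℕ) (hd : 1 ≤ d) (rstar : ℝ) (hrstar : 0 < rstar)
    (γ₀ : ℝ → ℝ)
    (hsmooth : ContDiffOn ℝ (⊤ : ℕ∞) γ₀ (Set.Ioi 0))
    (hmono : MonotoneOn γ₀ (Set.Ici 0))
    (hge1 : ∀ y : ℝ, 0 ≤ y → 1 ≤ γ₀ y)
    (hgrow : ∃ c C : ℝ, 0 < c ∧ 0 < C ∧ ∀ y : ℝ, 0 ≤ y →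
      c * (1 + y) ^ rstar ≤ γ₀ y ∧ γ₀ y ≤ C * (1 + y) ^ rstar)
    (hder : ∀ n : ℕ, ∃ C : ℝ, ∃ k : ℕ, ∀ y : ℝ, 1 ≤ y → |iteratedDeriv n γ₀ y| ≤ C * y ^ k) :
    ∃ C : ℝ, ∀ j : Fin 4, ∀ τ : ℝ, 0 ≤ τ → ∀ sv : Fin 4 → Ed d,
      |Zker (fun m => γ₀ (‖sv m‖ ^ 2)) j τ - 1 / (∑ m, γ₀ (‖sv m‖ ^ 2))|
        ≤ C * Real.exp (-2 * τ) := by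
  refine ⟨3 / 2, fun j τ hτ sv => ?_⟩
  rw [Zker_eq_sinhKernel]
  exact (statement9_general (by simp) one_pos (fun m => hge1 _ (sq_nonneg ‖sv m‖)) j hτ).trans_eq
    (by norm_num)
end
end

section
/- Let d ≥ 1. There is a constant C, depending only on γ⁰, such that for every j ∈ {1,2,3,4}, every R ≥ 1, every s⃗ = (s₁,s₂,s₃,s₄) ∈ (R^d)^4 with |s_l| ≤ R for l = 1,…,4, and every τ > 0, one has |∂Z^j(τ; s⃗)/∂τ| ≤ C·γ⁰(R²). -/
/-!
For `τ > 0` the kernel is `Z = (∫₀^τ w) / w(τ)` with `w(l) = e^{γ_j l} ∏_{m ≠ j} sinh (γ_m l)`, so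
`Z' = 1 - (w'/w)(τ) · (∫₀^τ w) / w(τ)`. The weight `w` is log-concave, because `sinh` is, so
`(w'/w)(τ) ≤ (w'/w)(l)` for `0 < l ≤ τ`. Multiplying by `w(l)` and integrating gives
`(w'/w)(τ) · ∫₀^τ w ≤ w(τ) - w(0) ≤ w(τ)`; since `w` is also nondecreasing, `0 ≤ Z' ≤ 1`.
-/

open MeasureTheory Real

noncomputable section

section IntegralDivSelf

variable {f : ℝ → ℝ} {a b : ℝ}

lemma hasDerivAt_integral_div_self (hint : IntervalIntegrable f volume a b)
    (hmeas : StronglyMeasurableAtFilter f (nhds b)) (hdiff : DifferentiableAt ℝ f b)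
    (hb : f b ≠ 0) :
    HasDerivAt (fun t => (∫ x in a..t, f x) / f t)
      (1 - logDeriv f b * (∫ x in a..b, f x) / f b) b := by
  have hprim := intervalIntegral.integral_hasDerivAt_right hint hmeas hdiff.continuousAt
  refine (hprim.fun_div hdiff.hasDerivAt hb).congr_deriv ?_
  rw [logDeriv_apply]
  field_simp

lemma logDeriv_mul_integral_le_sub (hab : a ≤ b) (hcont : ContinuousOn f (Set.Icc a b))
    (hdiff : ∀ x ∈ Set.Ioo a b, DifferentiableAt ℝ f x) (hpos : ∀ x ∈ Set.Ioo a b, 0 < f x)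
    (hanti : AntitoneOn (logDeriv f) (Set.Ioc a b)) :
    logDeriv f b * ∫ x in a..b, f x ≤ f b - f a := by
  rw [← intervalIntegral.integral_const_mul]
  refine intervalIntegral.integral_le_sub_of_hasDeriv_right_of_le hab hcont
    (fun x hx => (hdiff x hx).hasDerivAt.hasDerivWithinAt)
    (hcont.integrableOn_Icc.const_mul _) fun x hx => ?_
  rw [← le_div_iff₀ (hpos x hx), ← logDeriv_apply]
  exact hanti ⟨hx.1, hx.2.le⟩ ⟨hx.1.trans hx.2, le_rfl⟩ hx.2.le

lemma differentiableAt_and_deriv_mem_Icc_integral_div_self (hab : a < b)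
    (hdiff : Differentiable ℝ f) (ha : 0 ≤ f a) (hpos : ∀ x ∈ Set.Ioc a b, 0 < f x)
    (hanti : AntitoneOn (logDeriv f) (Set.Ioc a b)) (hb : 0 ≤ logDeriv f b) :
    DifferentiableAt ℝ (fun t => (∫ x in a..t, f x) / f t) b ∧
      deriv (fun t => (∫ x in a..t, f x) / f t) b ∈ Set.Icc 0 1 := by
  have hfb : 0 < f b := hpos b ⟨hab, le_rfl⟩
  have hnonneg : 0 ≤ ∫ x in a..b, f x :=
    (intervalIntegral.intervalIntegral_pos_of_pos_on (hdiff.continuous.intervalIntegrable a b)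
      (fun x hx => hpos x ⟨hx.1, hx.2.le⟩) hab).le
  have hle : logDeriv f b * ∫ x in a..b, f x ≤ f b := by
    linarith [logDeriv_mul_integral_le_sub hab.le hdiff.continuous.continuousOn
      (fun x _ => hdiff x) (fun x hx => hpos x ⟨hx.1, hx.2.le⟩) hanti]
  have hderiv := hasDerivAt_integral_div_self (hdiff.continuous.intervalIntegrable a b)
    (hdiff.continuous.stronglyMeasurableAtFilter _ _) (hdiff b) hfb.ne'
  refine ⟨hderiv.differentiableAt, ?_⟩
  rw [hderiv.deriv]
  exact ⟨sub_nonneg.2 ((div_le_one hfb).2 hle),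
    sub_le_self 1 (div_nonneg (mul_nonneg hb hnonneg) hfb.le)⟩

end IntegralDivSelf

lemma logDeriv_comp_const_mul (f : ℝ → ℝ) (c x : ℝ) :
    logDeriv (fun y => f (c * y)) x = c * logDeriv f (c * x) := by
  rw [logDeriv_apply, logDeriv_apply, deriv_comp_mul_left, smul_eq_mul, mul_div_assoc]

lemma logDeriv_sinh_apply (x : ℝ) : logDeriv sinh x = cosh x / sinh x := by
  rw [logDeriv_apply, Real.deriv_sinh]

lemma logDeriv_sinh_nonneg {x : ℝ} (hx : 0 ≤ x) : 0 ≤ logDeriv sinh x := by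
  rw [logDeriv_sinh_apply]
  exact div_nonneg (cosh_pos x).le (sinh_nonneg_iff.2 hx)

lemma antitoneOn_logDeriv_sinh : AntitoneOn (logDeriv sinh) (Set.Ioi 0) := by
  intro x hx y hy hxy
  rw [logDeriv_sinh_apply, logDeriv_sinh_apply,
    div_le_div_iff₀ (sinh_pos_iff.2 hy) (sinh_pos_iff.2 hx)]
  have hsub : 0 ≤ sinh (y - x) := sinh_nonneg_iff.2 (sub_nonneg.2 hxy)
  rw [sinh_sub] at hsub
  linarith

/-- The weight `l ↦ e^{c l} ∏_{m ∈ s} sinh (γ m l)`. The kernel `Zker γ j` is the primitive of the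
weight with `s = univ \ {j}` and `c = γ j`, divided by that weight. -/
def expSinhWeight {ι : Type*} (s : Finset ι) (c : ℝ) (γ : ι → ℝ) (l : ℝ) : ℝ :=
  exp (c * l) * ∏ m ∈ s, sinh (γ m * l)

section ExpSinhWeight

variable {ι : Type*} {s : Finset ι} {c : ℝ} {γ : ι → ℝ}

lemma differentiable_expSinhWeight : Differentiable ℝ (expSinhWeight s c γ) := by
  unfold expSinhWeight
  fun_prop

lemma expSinhWeight_pos (hγ : ∀ m ∈ s, 0 < γ m) {l : ℝ} (hl : 0 < l) :
    0 < expSinhWeight s c γ l :=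
  mul_pos (exp_pos _) (Finset.prod_pos fun m hm => sinh_pos_iff.2 (mul_pos (hγ m hm) hl))

lemma expSinhWeight_zero_nonneg : 0 ≤ expSinhWeight s c γ 0 :=
  mul_nonneg (exp_pos _).le (Finset.prod_nonneg fun m _ => by simp)

lemma logDeriv_expSinhWeight (hγ : ∀ m ∈ s, γ m ≠ 0) {l : ℝ} (hl : l ≠ 0) :
    logDeriv (expSinhWeight s c γ) l = c + ∑ m ∈ s, γ m * logDeriv sinh (γ m * l) := by
  have hsinh : ∀ m ∈ s, sinh (γ m * l) ≠ 0 := fun m hm =>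
    sinh_ne_zero.2 (mul_ne_zero (hγ m hm) hl)
  unfold expSinhWeight
  rw [logDeriv_mul (f := fun x => exp (c * x)) l (exp_ne_zero _)
    (Finset.prod_ne_zero_iff.2 hsinh) (by fun_prop) (by fun_prop),
    logDeriv_prod hsinh (by fun_prop)]
  simp only [logDeriv_comp_const_mul, Real.logDeriv_exp, Pi.one_apply, mul_one]

lemma logDeriv_expSinhWeight_nonneg (hc : 0 ≤ c) (hγ : ∀ m ∈ s, 0 < γ m) {l : ℝ} (hl : 0 < l) :
    0 ≤ logDeriv (expSinhWeight s c γ) l := by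
  rw [logDeriv_expSinhWeight (fun m hm => (hγ m hm).ne') hl.ne']
  exact add_nonneg hc (Finset.sum_nonneg fun m hm =>
    mul_nonneg (hγ m hm).le (logDeriv_sinh_nonneg (mul_pos (hγ m hm) hl).le))

lemma antitoneOn_logDeriv_expSinhWeight (hγ : ∀ m ∈ s, 0 < γ m) :
    AntitoneOn (logDeriv (expSinhWeight s c γ)) (Set.Ioi 0) := by
  intro x hx y hy hxy
  have hγ_ne : ∀ m ∈ s, γ m ≠ 0 := fun m hm => (hγ m hm).ne'
  rw [logDeriv_expSinhWeight hγ_ne (ne_of_gt hx), logDeriv_expSinhWeight hγ_ne (ne_of_gt hy)]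
  gcongr with m hm
  · exact (hγ m hm).le
  · exact antitoneOn_logDeriv_sinh (mul_pos (hγ m hm) hx) (mul_pos (hγ m hm) hy)
      (mul_le_mul_of_nonneg_left hxy (hγ m hm).le)

end ExpSinhWeight

lemma Zker_eq_integral_div (γ : Fin 4 → ℝ) (j : Fin 4) {τ : ℝ} (hτ : τ ≠ 0) :
    Zker γ j τ = (∫ l in (0 : ℝ)..τ, expSinhWeight (Finset.univ \ {j}) (γ j) γ l) /
      expSinhWeight (Finset.univ \ {j}) (γ j) γ τ := by
  rw [Zker, if_neg hτ, ← intervalIntegral.integral_div]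
  refine intervalIntegral.integral_congr fun l _ => ?_
  simp only [expSinhWeight]
  rw [Finset.prod_div_distrib, show -(γ j) * (τ - l) = γ j * l - γ j * τ by ring, exp_sub,
    div_mul_div_comm]

theorem statement10_general (γ : Fin 4 → ℝ) (j : Fin 4) (hj : 0 ≤ γ j)
    (hγ : ∀ m ≠ j, 0 < γ m) {τ : ℝ} (hτ : 0 < τ) :
    DifferentiableAt ℝ (Zker γ j) τ ∧ deriv (Zker γ j) τ ∈ Set.Icc 0 1 := by
  have hγ' : ∀ m ∈ Finset.univ \ {j}, 0 < γ m := fun m hm => hγ m (by simpa using hm)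
  have hZ : Zker γ j =ᶠ[nhds τ] fun t =>
      (∫ l in (0 : ℝ)..t, expSinhWeight (Finset.univ \ {j}) (γ j) γ l) /
        expSinhWeight (Finset.univ \ {j}) (γ j) γ t :=
    (eventually_ne_nhds hτ.ne').mono fun t ht => Zker_eq_integral_div γ j ht
  rw [hZ.differentiableAt_iff, hZ.deriv_eq]
  exact differentiableAt_and_deriv_mem_Icc_integral_div_self hτ differentiable_expSinhWeight
    expSinhWeight_zero_nonneg (fun l hl => expSinhWeight_pos hγ' hl.1)
    ((antitoneOn_logDeriv_expSinhWeight hγ').mono Set.Ioc_subset_Ioi_self)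
    (logDeriv_expSinhWeight_nonneg hj hγ' hτ)

theorem statement10 (d : ℕ) (hd : 1 ≤ d) (rstar : ℝ) (hrstar : 0 < rstar)
    (γ₀ : ℝ → ℝ)
    (hsmooth : ContDiffOn ℝ (⊤ : ℕ∞) γ₀ (Set.Ioi 0))
    (hmono : MonotoneOn γ₀ (Set.Ici 0))
    (hge1 : ∀ y : ℝ, 0 ≤ y → 1 ≤ γ₀ y)
    (hgrow : ∃ c C : ℝ, 0 < c ∧ 0 < C ∧ ∀ y : ℝ, 0 ≤ y →
      c * (1 + y) ^ rstar ≤ γ₀ y ∧ γ₀ y ≤ C * (1 + y) ^ rstar)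
    (hder : ∀ n : ℕ, ∃ C : ℝ, ∃ k : ℕ, ∀ y : ℝ, 1 ≤ y → |iteratedDeriv n γ₀ y| ≤ C * y ^ k) :
    ∃ C : ℝ, ∀ j : Fin 4, ∀ R : ℝ, 1 ≤ R → ∀ sv : Fin 4 → Ed d, (∀ m, ‖sv m‖ ≤ R) →
      ∀ τ : ℝ, 0 < τ →
        DifferentiableAt ℝ (Zker (fun m => γ₀ (‖sv m‖ ^ 2)) j) τ ∧
        |deriv (Zker (fun m => γ₀ (‖sv m‖ ^ 2)) j) τ| ≤ C * γ₀ (R ^ 2) := by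
  refine ⟨1, fun j R _ sv _ τ hτ => ?_⟩
  have hγ (m : Fin 4) : 0 < γ₀ (‖sv m‖ ^ 2) := one_pos.trans_le (hge1 _ (sq_nonneg _))
  refine (statement10_general _ j (hγ j).le (fun m _ => hγ m) hτ).imp_right fun h => ?_
  rw [abs_of_nonneg h.1, one_mul]
  exact h.2.trans (hge1 _ (sq_nonneg R))
end
end
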